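/- Let κ be a field of characteristic 3, let k₂ = κ(u) be the rational function field over κ, and let k₁ = κ(u²) ⊆ k₂. Write F₁ = k₁((t)) ⊆ F₂ = k₂((t)), and let E := F₂[Y]/(Y³ − Y − u·t^{−1}). Then E, regarded as a field extension of F₁ via F₁ ⊆ F₂ ⊆ E, is a Galois field extension of F₁ of degree 6 whose Galois group is isomorphic to the symmetric group S₃ on three letters. -/

import Mathlib

open Polynomial

/-- The ring homomorphism `k₁((t)) →+* k₂((t))` applying a ring homomorphism
`f : k₁ →+* k₂` to each coefficient of a Laurent series. -/
noncomputable def lsMap {R S : Type*} [CommRing R] [CommRing S]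
    (f : R →+* S) : LaurentSeries R →+* LaurentSeries S where
  toFun x := x.map f
  map_one' := by ext g; by_cases h : g = 0 <;> simp [h]
  map_mul' x y := HahnSeries.map_mul f.toNonUnitalRingHom
  map_zero' := by ext g; simp
  map_add' x y := HahnSeries.map_add f.toAddMonoidHom

/-- The subfield `κ(u²)` of the rational function field `κ(u)`. -/
noncomputable def kOne (κ : Type) [Field κ] : IntermediateField κ (RatFunc κ) :=
  IntermediateField.adjoin κ {(RatFunc.X : RatFunc κ) ^ 2}

/-- The polynomial `Y³ - Y - u·t⁻¹` over `F₂ = κ(u)((t))`. -/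
noncomputable def fTwo (κ : Type) [Field κ] : Polynomial (LaurentSeries (RatFunc κ)) :=
  X ^ 3 - X - C (HahnSeries.single (-1 : ℤ) (RatFunc.X : RatFunc κ))

/-! Put `a = u·t⁻¹` and let `y ∈ E` be the class of `Y`, so that `y³ - y = a`. Since `a² ∈ F₁`
while `a ∉ F₁`, the element `a` generates the quadratic extension `F₂/F₁`, and hence `E = F₁(y)`.
In characteristic 3 the roots of `Y³ - Y - a` are `y + i` for `i ∈ 𝔽₃`, and those of `Y³ - Y + a`
are their negatives, so the squares `(y + i)²` are permuted by every `F₁`-automorphism of `E`.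
They are the roots of the separable cubic `T(T - 1)² - a²` over `F₁`, and `y` is a polynomial
in them. Thus `E` is the splitting field of a separable cubic over `F₁`, and since
`[E : F₁] = 3 · 2 = 3!`, its Galois group is all of `S₃`. The degree over `F₂` is 3 because a pole
of `y³ - y` in `F₂` would have order divisible by 3. -/

theorem nonempty_aut_mulEquiv_perm_of_finrank_eq_factorial {F E : Type*} [Field F] [Field E]
    [Algebra F E] {f : F[X]} [f.IsSplittingField F E] (hsep : f.Separable)
    (hE : Module.finrank F E = f.natDegree.factorial) :
    Nonempty ((E ≃ₐ[F] E) ≃* Equiv.Perm (Fin f.natDegree)) := by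
  have hsplit : (f.map (algebraMap F E)).Splits := IsSplittingField.splits E f
  have : Fact (f.map (algebraMap F E)).Splits := ⟨hsplit⟩
  have : FiniteDimensional F E := IsSplittingField.finiteDimensional E f
  have : IsGalois F E := IsGalois.of_separable_splitting_field hsep
  let roots : f.rootSet E ≃ Fin f.natDegree :=
    Fintype.equivFinOfCardEq (card_rootSet_eq_natDegree hsep hsplit)
  let toGal : (E ≃ₐ[F] E) ≃* f.Gal := AlgEquiv.autCongr (IsSplittingField.algEquiv E f)
  let toPerm : (E ≃ₐ[F] E) →* Equiv.Perm (Fin f.natDegree) :=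
    roots.permCongrHom.toMonoidHom.comp ((Gal.galActionHom f E).comp toGal.toMonoidHom)
  have hinj : Function.Injective toPerm :=
    roots.permCongrHom.injective.comp ((Gal.galActionHom_injective f E).comp toGal.injective)
  have hcard : Nat.card (E ≃ₐ[F] E) = Nat.card (Equiv.Perm (Fin f.natDegree)) := by
    rw [IsGalois.card_aut_eq_finrank, hE, Nat.card_perm, Nat.card_fin]
  exact ⟨.ofBijective toPerm ((Nat.bijective_iff_injective_and_card _).2 ⟨hinj, hcard⟩)⟩

/-- The cubic `T(T - 1)² - b`, which `y ^ 2` satisfies whenever `(y ^ 3 - y) ^ 2 = b`. -/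
noncomputable def squareResolvent {R : Type*} [CommRing R] (b : R) : R[X] :=
  X * (X - 1) ^ 2 - C b

namespace squareResolvent

theorem natDegree_eq {R : Type*} [CommRing R] [Nontrivial R] (b : R) :
    (squareResolvent b).natDegree = 3 := by
  unfold squareResolvent
  compute_degree!

theorem map_eq {R S : Type*} [CommRing R] [CommRing S] (f : R →+* S) (b : R) :
    (squareResolvent b).map f = squareResolvent (f b) := by
  simp [squareResolvent]

theorem separable {R : Type*} [CommRing R] [CharP R 3] {b : R} (hb : IsUnit b) :
    (squareResolvent b).Separable := by
  obtain ⟨c, hc⟩ := hb.exists_left_inv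
  have hc' : (C c * C b : R[X]) = 1 := by rw [← C_mul, hc, C_1]
  have hderiv : derivative (squareResolvent b) = 1 - X := by
    simp only [squareResolvent, derivative_sub, derivative_mul, derivative_X, derivative_pow,
      derivative_C, derivative_one, Nat.cast_ofNat, map_ofNat]
    linear_combination (X ^ 2 - X) * CharP.ofNat_eq_zero R[X] 3
  refine ⟨-C c, C c * X * (1 - X), ?_⟩
  rw [hderiv, squareResolvent]
  linear_combination hc'

theorem sq_pow_three_sub_self_eq_prod {R : Type*} [CommRing R] [CharP R 3] (y : R) :
    squareResolvent ((y ^ 3 - y) ^ 2) =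
      (X - C (y ^ 2)) * (X - C ((y + 1) ^ 2)) * (X - C ((y - 1) ^ 2)) := by
  simp only [squareResolvent, map_pow, map_sub, map_add, map_one]
  linear_combination (C y ^ 2 * X ^ 2 - C y ^ 4 * X) * CharP.ofNat_eq_zero R[X] 3

theorem isSplittingField {F E : Type*} [Field F] [Field E] [Algebra F E] [CharP F 3] {b : F}
    {y : E} (hy : (y ^ 3 - y) ^ 2 = algebraMap F E b) (hgen : Algebra.adjoin F {y} = ⊤) :
    (squareResolvent b).IsSplittingField F E := by
  have : CharP E 3 := charP_of_injective_algebraMap (algebraMap F E).injective 3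
  have hmap : (squareResolvent b).map (algebraMap F E) =
      (X - C (y ^ 2)) * (X - C ((y + 1) ^ 2)) * (X - C ((y - 1) ^ 2)) := by
    rw [map_eq, ← hy, sq_pow_three_sub_self_eq_prod]
  have hne : (squareResolvent b).map (algebraMap F E) ≠ 0 := by
    rw [map_eq]
    exact ne_zero_of_natDegree_gt (n := 2) (by rw [natDegree_eq]; norm_num)
  have mem_rootSet {x : E} (hx : ((squareResolvent b).map (algebraMap F E)).eval x = 0) :
      x ∈ (squareResolvent b).rootSet E :=
    mem_rootSet'.2 ⟨hne, by rwa [aeval_def, ← eval_map]⟩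
  have hroot₀ : y ^ 2 ∈ (squareResolvent b).rootSet E := mem_rootSet (by simp [hmap])
  have hroot₁ : (y + 1) ^ 2 ∈ (squareResolvent b).rootSet E := mem_rootSet (by simp [hmap])
  have hy_eq : y = y ^ 2 - (y + 1) ^ 2 + 1 := by
    linear_combination y * CharP.ofNat_eq_zero E 3
  have hy_mem : y ∈ Algebra.adjoin F ((squareResolvent b).rootSet E) := by
    rw [hy_eq]
    exact add_mem (sub_mem (Algebra.subset_adjoin hroot₀) (Algebra.subset_adjoin hroot₁))
      (one_mem _)
  refine ⟨?_, top_le_iff.1 (hgen ▸ Algebra.adjoin_le (Set.singleton_subset_iff.2 hy_mem))⟩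
  rw [hmap]
  exact ((Splits.X_sub_C _).mul (Splits.X_sub_C _)).mul (Splits.X_sub_C _)

end squareResolvent

theorem adjoin_singleton_eq_top_of_finrank_prime {F A : Type*} [Field F] [Ring A] [IsDomain A]
    [Algebra F A] (hA : (Module.finrank F A).Prime) {a : A} (ha : a ∉ (algebraMap F A).range) :
    Algebra.adjoin F {a} = ⊤ := by
  have := Subalgebra.isSimpleOrder_of_finrank_prime F A hA
  refine (eq_bot_or_eq_top _).resolve_left fun hbot => ha ?_
  exact Algebra.mem_bot.1 (hbot ▸ Algebra.self_mem_adjoin_singleton F a)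

theorem adjoin_singleton_eq_top_of_tower {R S A : Type*} [CommSemiring R] [CommSemiring S]
    [CommSemiring A] [Algebra R S] [Algebra S A] [Algebra R A] [IsScalarTower R S A] {a : S}
    {y : A} (ha : Algebra.adjoin R {a} = ⊤) (hy : Algebra.adjoin S {y} = ⊤)
    (hay : algebraMap S A a ∈ Algebra.adjoin R {y}) : Algebra.adjoin R {y} = ⊤ := by
  have hS : (IsScalarTower.toAlgHom R S A).range ≤ Algebra.adjoin R {y} := by
    rw [← Algebra.map_top, ← ha, AlgHom.map_adjoin, Set.image_singleton]
    exact Algebra.adjoin_le (Set.singleton_subset_iff.2 hay)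
  refine top_le_iff.1 fun x _ => ?_
  induction (hy ▸ Algebra.mem_top : x ∈ Algebra.adjoin S {y}) using Algebra.adjoin_induction with
  | mem x hx => exact Algebra.subset_adjoin hx
  | algebraMap s => exact hS ⟨s, rfl⟩
  | add _ _ _ _ hx hz => exact add_mem (hx trivial) (hz trivial)
  | mul _ _ _ _ hx hz => exact mul_mem (hx trivial) (hz trivial)

theorem isGalois_finrank_perm_of_artinSchreier_over_quadratic {F K E : Type*} [Field F] [Field K]
    [Field E] [Algebra F K] [Algebra K E] [Algebra F E] [IsScalarTower F K E] [CharP F 3]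
    (hK : Module.finrank F K = 2) (hE : Module.finrank K E = 3) {a : K}
    (ha : a ∉ (algebraMap F K).range) (ha_sq : a ^ 2 ∈ (algebraMap F K).range) {y : E}
    (hy : y ^ 3 - y = algebraMap K E a) (hgen : Algebra.adjoin K {y} = ⊤) :
    IsGalois F E ∧ Module.finrank F E = 6 ∧
      Nonempty ((E ≃ₐ[F] E) ≃* Equiv.Perm (Fin 3)) := by
  obtain ⟨b, hb⟩ := ha_sq
  have hb0 : b ≠ 0 := by
    rintro rfl
    exact ha ⟨0, by rw [map_zero, eq_comm, ← sq_eq_zero_iff, ← hb, map_zero]⟩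
  have hyb : (y ^ 3 - y) ^ 2 = algebraMap F E b := by
    rw [hy, ← map_pow, ← hb, ← IsScalarTower.algebraMap_apply]
  have hgenF : Algebra.adjoin F {y} = ⊤ := by
    refine adjoin_singleton_eq_top_of_tower
      (adjoin_singleton_eq_top_of_finrank_prime (hK ▸ Nat.prime_two) ha) hgen ?_
    have hy_mem := Algebra.self_mem_adjoin_singleton F y
    exact hy ▸ sub_mem (pow_mem hy_mem 3) hy_mem
  have hfin : Module.finrank F E = 6 := by rw [← Module.finrank_mul_finrank F K E, hK, hE]
  have hdeg : (squareResolvent b).natDegree = 3 := squareResolvent.natDegree_eq b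
  have hsep : (squareResolvent b).Separable := squareResolvent.separable hb0.isUnit
  have := squareResolvent.isSplittingField hyb hgenF
  refine ⟨IsGalois.of_separable_splitting_field hsep, hfin, ?_⟩
  exact hdeg ▸ nonempty_aut_mulEquiv_perm_of_finrank_eq_factorial hsep (by rw [hfin, hdeg]; rfl)

section LaurentSeriesBaseChange

theorem lsMap_single {R S : Type*} [CommRing R] [CommRing S] (f : R →+* S) (n : ℤ) (r : R) :
    lsMap f (HahnSeries.single n r) = HahnSeries.single n (f r) :=
  HahnSeries.map_single f.toZeroHom

theorem single_mem_range_lsMap_iff {R S : Type*} [CommRing R] [CommRing S] {f : R →+* S} {n : ℤ}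
    {s : S} : HahnSeries.single n s ∈ (lsMap f).range ↔ s ∈ f.range := by
  constructor
  · rintro ⟨x, hx⟩
    exact ⟨x.coeff n, (congrArg (HahnSeries.coeff · n) hx).trans (HahnSeries.coeff_single_same n s)⟩
  · rintro ⟨r, rfl⟩
    exact ⟨HahnSeries.single n r, lsMap_single f n r⟩

variable (R S : Type*) [CommRing R] [CommRing S] [Algebra R S]

/-- `S((t))` as an algebra over `R((t))`, through the coefficientwise map `lsMap`. It is
activated only locally so that it does not compete with `Algebra.id` when `R = S`. -/
@[reducible]
noncomputable def laurentSeriesAlgebra : Algebra (LaurentSeries R) (LaurentSeries S) :=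
  (lsMap (algebraMap R S)).toAlgebra

attribute [local instance] laurentSeriesAlgebra

variable {R S}

theorem coeff_smul_single_zero (x : LaurentSeries R) (s : S) (n : ℤ) :
    (x • (HahnSeries.single 0 s : LaurentSeries S)).coeff n = x.coeff n • s := by
  rw [Algebra.smul_def, HahnSeries.coeff_mul_single_zero, Algebra.smul_def]
  rfl

theorem linearIndependent_laurentSeries_single_zero {ι : Type*} {v : ι → S}
    (hv : LinearIndependent R v) :
    LinearIndependent (LaurentSeries R) fun i => (HahnSeries.single 0 (v i) : LaurentSeries S) := by
  rw [linearIndependent_iff'] at hv ⊢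
  intro s x hx i hi
  ext n
  refine hv s (fun j => (x j).coeff n) ?_ i hi
  simpa [HahnSeries.coeff_sum, coeff_smul_single_zero] using congrArg (HahnSeries.coeff · n) hx

theorem span_laurentSeries_single_zero_eq_top {ι : Type*} [Finite ι] (b : Module.Basis ι R S) :
    Submodule.span (LaurentSeries R)
      (Set.range fun i => (HahnSeries.single 0 (b i) : LaurentSeries S)) = ⊤ := by
  cases nonempty_fintype ι
  refine eq_top_iff.2 fun x _ => (Submodule.mem_span_range_iff_exists_fun _).2
    ⟨fun i => x.map (b.coord i), ?_⟩
  ext n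
  simp [HahnSeries.coeff_sum, coeff_smul_single_zero, b.sum_repr]

theorem finrank_laurentSeries [Nontrivial R] [Module.Free R S] [Module.Finite R S] :
    Module.finrank (LaurentSeries R) (LaurentSeries S) = Module.finrank R S := by
  let b := Module.Free.chooseBasis R S
  let b' : Module.Basis _ (LaurentSeries R) (LaurentSeries S) :=
    .mk (linearIndependent_laurentSeries_single_zero b.linearIndependent)
      (span_laurentSeries_single_zero_eq_top b).ge
  rw [Module.finrank_eq_card_basis b, Module.finrank_eq_card_basis b']

end LaurentSeriesBaseChange

theorem dvd_order_pow_sub_self_of_order_neg {R : Type*} [CommRing R] [IsDomain R] {n : ℕ}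
    (hn : 2 ≤ n) (r : LaurentSeries R) (hr : (r ^ n - r).order < 0) :
    (n : ℤ) ∣ (r ^ n - r).order := by
  have hpow : (r ^ n).order = n * r.order := by simp
  have hne : r ^ n - r ≠ 0 := by
    intro h0
    simp [h0] at hr
  have hr_neg : r.order < 0 := by
    by_contra! hr_nonneg
    have hmin : min (r ^ n).order (-r).order ≤ (r ^ n + -r).order :=
      HahnSeries.min_order_le_order_add (by rwa [← sub_eq_add_neg])
    rw [← sub_eq_add_neg, HahnSeries.order_neg, hpow] at hmin
    exact hr.not_ge ((le_min (by positivity) hr_nonneg).trans hmin)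
  have hr0 : r ≠ 0 := by
    rintro rfl
    simp at hr_neg
  have hlt : (r ^ n).orderTop < r.orderTop := by
    rw [← HahnSeries.order_eq_orderTop_of_ne_zero (pow_ne_zero n hr0),
      ← HahnSeries.order_eq_orderTop_of_ne_zero hr0, hpow, WithTop.coe_lt_coe]
    nlinarith
  have horder : (r ^ n - r).order = (r ^ n).order := by
    have horderTop := HahnSeries.orderTop_sub hlt
    rwa [← HahnSeries.order_eq_orderTop_of_ne_zero hne,
      ← HahnSeries.order_eq_orderTop_of_ne_zero (pow_ne_zero n hr0), WithTop.coe_inj] at horderTop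
  exact ⟨r.order, horder.trans hpow⟩

theorem natDegree_X_pow_three_sub_X_sub_C {R : Type*} [CommRing R] [Nontrivial R] (a : R) :
    (X ^ 3 - X - C a).natDegree = 3 := by
  compute_degree!

theorem irreducible_X_pow_three_sub_X_sub_C {k : Type*} [Field k] {a : LaurentSeries k}
    (ha : a.order < 0) (ha3 : ¬ 3 ∣ a.order) :
    Irreducible (X ^ 3 - X - C a : (LaurentSeries k)[X]) := by
  have hdeg := natDegree_X_pow_three_sub_X_sub_C a
  refine irreducible_of_degree_le_three_of_not_isRoot (by rw [hdeg]; decide) fun r hr => ha3 ?_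
  have hra : r ^ 3 - r = a := by simpa [sub_eq_zero] using hr
  exact hra ▸ dvd_order_pow_sub_self_of_order_neg (by norm_num) r (hra ▸ ha)

section RationalFunctions

variable (k : Type*) [Field k]

theorem finrank_adjoin_ratFunc_X_pow (n : ℕ) :
    Module.finrank (IntermediateField.adjoin k {(RatFunc.X : RatFunc k) ^ n}) (RatFunc k) = n := by
  have hX : (RatFunc.X : RatFunc k) ^ n = algebraMap k[X] (RatFunc k) (X ^ n) := by simp
  rw [RatFunc.finrank_eq_max_natDegree, hX, RatFunc.num_algebraMap, RatFunc.denom_algebraMap]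
  simp

theorem ratFunc_X_notMem_adjoin_X_pow {n : ℕ} (hn : n ≠ 1) :
    (RatFunc.X : RatFunc k) ∉ IntermediateField.adjoin k {(RatFunc.X : RatFunc k) ^ n} := by
  intro hX
  have htop : IntermediateField.adjoin k {(RatFunc.X : RatFunc k) ^ n} = ⊤ := by
    rw [eq_top_iff, ← RatFunc.adjoin_X (K := k)]
    exact IntermediateField.adjoin_simple_le_iff.2 hX
  have hrank := finrank_adjoin_ratFunc_X_pow k n
  rw [htop, IntermediateField.finrank_top] at hrank
  exact hn hrank.symm

end RationalFunctions

section Example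

variable (κ : Type) [Field κ]

theorem irreducible_fTwo : Irreducible (fTwo κ) := by
  have horder : (HahnSeries.single (-1 : ℤ) (RatFunc.X : RatFunc κ)).order = -1 :=
    HahnSeries.order_single RatFunc.X_ne_zero
  exact irreducible_X_pow_three_sub_X_sub_C (by rw [horder]; decide) (by rw [horder]; decide)

theorem root_fTwo_pow_three_sub_root :
    AdjoinRoot.root (fTwo κ) ^ 3 - AdjoinRoot.root (fTwo κ) =
      algebraMap (LaurentSeries (RatFunc κ)) (AdjoinRoot (fTwo κ))
        (HahnSeries.single (-1) RatFunc.X) := by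
  have hroot := AdjoinRoot.eval₂_root (fTwo κ)
  rwa [fTwo, eval₂_sub, eval₂_sub, eval₂_pow, eval₂_X, eval₂_C, sub_eq_zero] at hroot

theorem finrank_adjoinRoot_fTwo :
    Module.finrank (LaurentSeries (RatFunc κ)) (AdjoinRoot (fTwo κ)) = 3 := by
  rw [(AdjoinRoot.powerBasis (irreducible_fTwo κ).ne_zero).finrank, AdjoinRoot.powerBasis_dim]
  exact natDegree_X_pow_three_sub_X_sub_C _

theorem single_X_notMem_range_lsMap (n : ℤ) :
    HahnSeries.single n (RatFunc.X : RatFunc κ) ∉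
      (lsMap (algebraMap (kOne κ) (RatFunc κ))).range := by
  rw [single_mem_range_lsMap_iff]
  rintro ⟨x, hx⟩
  have hX : (RatFunc.X : RatFunc κ) ∈ kOne κ := hx ▸ x.2
  exact ratFunc_X_notMem_adjoin_X_pow κ (by norm_num) hX

theorem single_X_sq_mem_range_lsMap (n : ℤ) :
    HahnSeries.single n (RatFunc.X : RatFunc κ) ^ 2 ∈
      (lsMap (algebraMap (kOne κ) (RatFunc κ))).range := by
  rw [HahnSeries.single_pow, single_mem_range_lsMap_iff]
  exact ⟨⟨RatFunc.X ^ 2, IntermediateField.mem_adjoin_simple_self κ _⟩, rfl⟩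

theorem finrank_kOne_ratFunc : Module.finrank (kOne κ) (RatFunc κ) = 2 :=
  finrank_adjoin_ratFunc_X_pow κ 2

end Example

set_option maxHeartbeats 1000000 in
/-- With `char κ = 3`, `F₁ = κ(u²)((t)) ⊆ F₂ = κ(u)((t))`, the field
`E = F₂[Y]/(Y³ - Y - u·t⁻¹)`, viewed over `F₁`, is Galois of degree 6 with Galois
group the symmetric group `S₃`. -/
theorem artinSchreier_example_galois_S3
    (κ : Type) [Field κ] [CharP κ 3] :
    Irreducible (fTwo κ) ∧
    ∀ [Fact (Irreducible (fTwo κ))],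
      letI : Algebra (LaurentSeries (kOne κ)) (AdjoinRoot (fTwo κ)) :=
        ((algebraMap (LaurentSeries (RatFunc κ)) (AdjoinRoot (fTwo κ))).comp
          (lsMap (algebraMap (kOne κ) (RatFunc κ)))).toAlgebra
      IsGalois (LaurentSeries (kOne κ)) (AdjoinRoot (fTwo κ)) ∧
      Module.finrank (LaurentSeries (kOne κ)) (AdjoinRoot (fTwo κ)) = 6 ∧
      Nonempty ((AdjoinRoot (fTwo κ) ≃ₐ[LaurentSeries (kOne κ)] AdjoinRoot (fTwo κ))
        ≃* Equiv.Perm (Fin 3)) := by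
  refine ⟨irreducible_fTwo κ, ?_⟩
  intro _
  let := laurentSeriesAlgebra (kOne κ) (RatFunc κ)
  let : Algebra (LaurentSeries (kOne κ)) (AdjoinRoot (fTwo κ)) :=
    ((algebraMap (LaurentSeries (RatFunc κ)) (AdjoinRoot (fTwo κ))).comp
      (lsMap (algebraMap (kOne κ) (RatFunc κ)))).toAlgebra
  have := IsScalarTower.of_algebraMap_eq (R := LaurentSeries (kOne κ))
    (S := LaurentSeries (RatFunc κ)) (A := AdjoinRoot (fTwo κ)) fun _ => rfl
  have : Module.Finite (kOne κ) (RatFunc κ) :=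
    Module.finite_of_finrank_pos (by rw [finrank_kOne_ratFunc]; exact two_pos)
  have : CharP (LaurentSeries (kOne κ)) 3 :=
    charP_of_injective_ringHom (algebraMap κ (LaurentSeries (kOne κ))).injective 3
  exact isGalois_finrank_perm_of_artinSchreier_over_quadratic
    (finrank_laurentSeries.trans (finrank_kOne_ratFunc κ)) (finrank_adjoinRoot_fTwo κ)
    (single_X_notMem_range_lsMap κ (-1)) (single_X_sq_mem_range_lsMap κ (-1))
    (root_fTwo_pow_three_sub_root κ) AdjoinRoot.adjoinRoot_eq_top
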